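/- Let 0 < κ < 1 and C > 0. There exists a positive integer N depending only on κ and C such that for every Borel probability measure μ supported on [−C, C] satisfying μ(B(x, r)) ≤ C r^κ for all x ∈ supp(μ) and r > 0, writing K = supp(μ), the set N K^{(N)} − N K^{(N)} has Lebesgue measure bounded below by a positive constant depending only on κ and C. -/

import Mathlib

open MeasureTheory
open scoped Pointwise ENNReal

/-- The `N`-fold sumset `{x₁ + ⋯ + x_N : x_i ∈ S}`. -/
def sumN (N : ℕ) (S : Set ℝ) : Set ℝ :=
  {x | ∃ f : Fin N → ℝ, (∀ i, f i ∈ S) ∧ x = ∑ i, f i}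

/-- The `N`-fold product set `{x₁ ⋯ x_N : x_i ∈ S}`. -/
def prodN (N : ℕ) (S : Set ℝ) : Set ℝ :=
  {x | ∃ f : Fin N → ℝ, (∀ i, f i ∈ S) ∧ x = ∏ i, f i}

/-- The support of a measure: points all of whose open neighbourhoods have positive measure. -/
def msupport {X : Type*} [TopologicalSpace X] [MeasurableSpace X]
    (μ : Measure X) : Set X :=
  {x | ∀ U : Set X, IsOpen U → x ∈ U → 0 < μ U}

open scoped Matrix

/-!
Let `μ` be the measure on `K`. If `k > 1 / κ`, the product measure `μ^k` has finite `1`-energy, so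
a random linear form `a` with coefficients in `[0, 1]` maps `K^k` to a set of length bounded below
(Marstrand). Boundedly many differences of this image then fill `[-1, 1]`, that is,
`[-1, 1] ⊆ {∑ i, a i * x i | x i ∈ n K - n K}`.

The coefficients are now eliminated one at a time. Two representations of one number differ by
a vector `x` of bounded sum-product complexity with `∑ i, a i * x i = 0` and some `x j` bounded
away from `0`.
If `t = ∑ i, a i * z i`, then `x j * t` is represented by the vector `x j • z - z j • x`, whose
`j`-th entry is `0`; so `[-1, 1]` is still reached without `a j`, at the price of a larger
complexity. Once a single coefficient `b` is left, `[-1, 1] ⊆ b • (m K^(d) - m K^(d))` with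
`|b| ≤ 1`, and `m K^(d) - m K^(d)` has measure at least `2`.
-/

section SumProd

variable {K S : Set ℝ} {m n d d' : ℕ} {x y : ℝ}

lemma add_mem_sumN (hx : x ∈ sumN m S) (hy : y ∈ sumN n S) : x + y ∈ sumN (m + n) S := by
  obtain ⟨f, hf, rfl⟩ := hx
  obtain ⟨g, hg, rfl⟩ := hy
  exact ⟨Fin.append f g, Fin.addCases (by simpa using hf) (by simpa using hg),
    by simp [Fin.sum_univ_add]⟩

lemma mul_mem_prodN (hx : x ∈ prodN m S) (hy : y ∈ prodN n S) : x * y ∈ prodN (m + n) S := by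
  obtain ⟨f, hf, rfl⟩ := hx
  obtain ⟨g, hg, rfl⟩ := hy
  exact ⟨Fin.append f g, Fin.addCases (by simpa using hf) (by simpa using hg),
    by simp [Fin.prod_univ_add]⟩

lemma subset_sumN_one : S ⊆ sumN 1 S := fun x hx => ⟨fun _ => x, fun _ => hx, by simp⟩

lemma pow_mem_prodN (hx : x ∈ S) (n : ℕ) : x ^ n ∈ prodN n S :=
  ⟨fun _ => x, fun _ => hx, by simp⟩

lemma mul_mem_sumN_prodN (hx : x ∈ sumN m (prodN d K)) (hy : y ∈ sumN n (prodN d' K)) :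
    x * y ∈ sumN (m * n) (prodN (d + d') K) := by
  obtain ⟨f, hf, rfl⟩ := hx
  obtain ⟨g, hg, rfl⟩ := hy
  refine ⟨fun i => f (finProdFinEquiv.symm i).1 * g (finProdFinEquiv.symm i).2,
    fun i => mul_mem_prodN (hf _) (hg _), ?_⟩
  rw [finProdFinEquiv.symm.sum_comp fun p => f p.1 * g p.2, Fintype.sum_prod_type,
    Finset.sum_mul_sum]

lemma abs_le_of_mem_sumN {B : ℝ} (h : ∀ y ∈ S, |y| ≤ B) (hx : x ∈ sumN n S) :
    |x| ≤ n * B := by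
  obtain ⟨f, hf, rfl⟩ := hx
  calc |∑ i, f i| ≤ ∑ i, |f i| := Finset.abs_sum_le_sum_abs _ _
    _ ≤ ∑ _i : Fin n, B := Finset.sum_le_sum fun i _ => h _ (hf i)
    _ = n * B := by simp

lemma abs_le_of_mem_prodN {B : ℝ} (h : ∀ y ∈ S, |y| ≤ B) (hx : x ∈ prodN n S) :
    |x| ≤ B ^ n := by
  obtain ⟨f, hf, rfl⟩ := hx
  calc |∏ i, f i| = ∏ i, |f i| := Finset.abs_prod _ _
    _ ≤ ∏ _i : Fin n, B := Finset.prod_le_prod (fun _ _ => abs_nonneg _) fun i _ => h _ (hf i)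
    _ = B ^ n := by simp

/-- The set `m K^(d) - m K^(d)` of differences of two sums of `m` products of `d` elements
of `K`. The theorem is about the case `m = d`. -/
def sumProdDiff (K : Set ℝ) (m d : ℕ) : Set ℝ := sumN m (prodN d K) - sumN m (prodN d K)

lemma sub_mem_sumProdDiff_one {u v : ℝ} (hu : u ∈ prodN d K) (hv : v ∈ prodN d K) :
    u - v ∈ sumProdDiff K 1 d :=
  Set.sub_mem_sub (subset_sumN_one hu) (subset_sumN_one hv)

lemma add_mem_sumProdDiff (hx : x ∈ sumProdDiff K m d) (hy : y ∈ sumProdDiff K n d) :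
    x + y ∈ sumProdDiff K (m + n) d := by
  obtain ⟨p, hp, q, hq, rfl⟩ := hx
  obtain ⟨r, hr, s, hs, rfl⟩ := hy
  exact ⟨p + r, add_mem_sumN hp hr, q + s, add_mem_sumN hq hs, add_sub_add_comm p r q s⟩

lemma neg_mem_sumProdDiff (hx : x ∈ sumProdDiff K m d) : -x ∈ sumProdDiff K m d := by
  obtain ⟨p, hp, q, hq, rfl⟩ := hx
  exact ⟨q, hq, p, hp, (neg_sub p q).symm⟩

lemma sub_mem_sumProdDiff (hx : x ∈ sumProdDiff K m d) (hy : y ∈ sumProdDiff K n d) :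
    x - y ∈ sumProdDiff K (m + n) d :=
  sub_eq_add_neg x y ▸ add_mem_sumProdDiff hx (neg_mem_sumProdDiff hy)

lemma mul_mem_sumProdDiff (hx : x ∈ sumProdDiff K m d) (hy : y ∈ sumProdDiff K n d') :
    x * y ∈ sumProdDiff K (2 * (m * n)) (d + d') := by
  obtain ⟨p, hp, q, hq, rfl⟩ := hx
  obtain ⟨r, hr, s, hs, rfl⟩ := hy
  rw [two_mul]
  exact ⟨p * r + q * s, add_mem_sumN (mul_mem_sumN_prodN hp hr) (mul_mem_sumN_prodN hq hs),
    p * s + q * r, add_mem_sumN (mul_mem_sumN_prodN hp hs) (mul_mem_sumN_prodN hq hr),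
    by dsimp only; ring⟩

lemma pow_mul_mem_sumProdDiff {u : ℝ} (hu : u ∈ K) (n : ℕ) (hx : x ∈ sumProdDiff K m d) :
    u ^ n * x ∈ sumProdDiff K m (n + d) := by
  obtain ⟨p, hp, q, hq, rfl⟩ := hx
  have mem {w : ℝ} (hw : w ∈ sumN m (prodN d K)) : u ^ n * w ∈ sumN m (prodN (n + d) K) := by
    simpa using mul_mem_sumN_prodN (subset_sumN_one (pow_mem_prodN hu n)) hw
  exact ⟨_, mem hp, _, mem hq, (mul_sub _ p q).symm⟩

lemma zero_mem_sumProdDiff (hK : K.Nonempty) (m d : ℕ) : 0 ∈ sumProdDiff K m d := by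
  obtain ⟨u, hu⟩ := hK
  have h : ∑ _i : Fin m, u ^ d ∈ sumN m (prodN d K) := ⟨_, fun _ => pow_mem_prodN hu d, rfl⟩
  exact ⟨_, h, _, h, sub_self _⟩

lemma sumProdDiff_subset_of_le (hK : K.Nonempty) (h : m ≤ n) :
    sumProdDiff K m d ⊆ sumProdDiff K n d := fun x hx => by
  obtain ⟨r, rfl⟩ := Nat.exists_eq_add_of_le h
  simpa using add_mem_sumProdDiff hx (zero_mem_sumProdDiff hK r d)

lemma sum_mem_sumProdDiff (hK : K.Nonempty) {f : Fin n → ℝ} (hf : ∀ i, f i ∈ sumProdDiff K m d) :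
    ∑ i, f i ∈ sumProdDiff K (n * m) d := by
  induction n with
  | zero => simpa using zero_mem_sumProdDiff hK 0 d
  | succ n ih =>
    rw [Fin.sum_univ_castSucc, Nat.succ_mul]
    exact add_mem_sumProdDiff (ih fun i => hf _) (hf _)

lemma natCast_mul_mem_sumProdDiff (hK : K.Nonempty) (n : ℕ) (hx : x ∈ sumProdDiff K m d) :
    n * x ∈ sumProdDiff K (n * m) d := by
  simpa using sum_mem_sumProdDiff hK fun _ : Fin n => hx

lemma intCast_mul_mem_sumProdDiff (hK : K.Nonempty) {q : ℤ} (hq : |q| ≤ n)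
    (hx : x ∈ sumProdDiff K m d) : q * x ∈ sumProdDiff K (n * m) d := by
  have hmono {p : ℕ} (hp : p ≤ n) : p * x ∈ sumProdDiff K (n * m) d :=
    sumProdDiff_subset_of_le hK (Nat.mul_le_mul_right m hp) (natCast_mul_mem_sumProdDiff hK p hx)
  obtain ⟨p, rfl | rfl⟩ := Int.eq_nat_or_neg q
  · simpa using hmono (by simpa using hq)
  · simpa using neg_mem_sumProdDiff (hmono (by simpa using hq))

lemma abs_le_of_mem_sumProdDiff {C : ℝ} (hK : K ⊆ Set.Icc (-C) C) (hx : x ∈ sumProdDiff K m d) :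
    |x| ≤ 2 * (m * C ^ d) := by
  obtain ⟨p, hp, q, hq, rfl⟩ := hx
  have bound {w : ℝ} (hw : w ∈ sumN m (prodN d K)) : |w| ≤ m * C ^ d :=
    abs_le_of_mem_sumN (fun _ => abs_le_of_mem_prodN fun _ hy => abs_le.2 (hK hy)) hw
  calc |p - q| ≤ |p| + |q| := abs_sub p q
    _ ≤ 2 * (m * C ^ d) := by linarith [bound hp, bound hq]

end SumProd

section DotImage

variable {ι : Type*} [Fintype ι] {S : Set ℝ} {a x : ι → ℝ} {n : ℕ}

/-- The image of the cube `S^ι` under the linear form with coefficients `a`, that is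
`{∑ i, a i * x i | x i ∈ S}`. -/
def dotImage (a : ι → ℝ) (S : Set ℝ) : Set ℝ := (a ⬝ᵥ ·) '' Set.univ.pi fun _ => S

lemma dotProduct_mem_dotImage (hx : ∀ i, x i ∈ S) : a ⬝ᵥ x ∈ dotImage a S :=
  ⟨x, fun i _ => hx i, rfl⟩

lemma dotImage_of_unique [Unique ι] (a : ι → ℝ) (S : Set ℝ) :
    dotImage a S = a default • S := by
  ext t
  constructor
  · rintro ⟨x, hx, rfl⟩
    exact ⟨x default, hx _ trivial, by simp [dotProduct]⟩
  · rintro ⟨s, hs, rfl⟩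
    exact ⟨fun _ => s, fun _ _ => hs, by simp [dotProduct]⟩

lemma abs_le_of_mem_dotImage {B t : ℝ} (ha : ∀ i, |a i| ≤ 1) (hS : ∀ s ∈ S, |s| ≤ B)
    (ht : t ∈ dotImage a S) : |t| ≤ Fintype.card ι * B := by
  obtain ⟨x, hx, rfl⟩ := ht
  calc |∑ i, a i * x i| ≤ ∑ i, |a i * x i| := Finset.abs_sum_le_sum_abs _ _
    _ ≤ ∑ _i : ι, 1 * B := by
        gcongr with i
        rw [abs_mul]
        exact mul_le_mul (ha i) (hS _ (hx i trivial)) (abs_nonneg _) zero_le_one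
    _ = Fintype.card ι * B := by simp

lemma sumN_dotImage_sub_subset (K : Set ℝ) (hK : K.Nonempty) (a : ι → ℝ) (n : ℕ) :
    sumN n (dotImage a K - dotImage a K) ⊆ dotImage a (sumProdDiff K n 1) := by
  rintro _ ⟨f, hf, rfl⟩
  have hdiff (j : Fin n) : ∃ w : ι → ℝ, (∀ i, w i ∈ sumProdDiff K 1 1) ∧ f j = a ⬝ᵥ w := by
    obtain ⟨_, ⟨x, hx, rfl⟩, _, ⟨y, hy, rfl⟩, hxy⟩ := hf j
    refine ⟨x - y, fun i => ?_, by rw [dotProduct_sub, ← hxy]⟩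
    simpa using sub_mem_sumProdDiff_one (pow_mem_prodN (hx i trivial) 1)
      (pow_mem_prodN (hy i trivial) 1)
  choose w hw hfw using hdiff
  simp_rw [hfw, ← dotProduct_sum]
  refine dotProduct_mem_dotImage fun i => ?_
  rw [Finset.sum_apply]
  simpa using sum_mem_sumProdDiff hK fun j => hw j i

lemma two_le_volume_of_Icc_subset_smul {b : ℝ} (hb : |b| ≤ 1) (h : Set.Icc (-1) 1 ⊆ b • S) :
    2 ≤ volume S :=
  calc (2 : ℝ≥0∞) = volume (Set.Icc (-1 : ℝ) 1) := by rw [Real.volume_Icc]; norm_num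
    _ ≤ volume (b • S) := measure_mono h
    _ = ENNReal.ofReal |b| * volume S := by simp [Measure.addHaar_smul]
    _ ≤ volume S := mul_le_of_le_one_left zero_le (by simpa using hb)

end DotImage

section Elimination

/-- `K` lies in `[-C, C]`, and it contains a point `u` at distance at least `ρ` both from `0` and
from another point of `K`, so that each `K^(d) - K^(d)` contains an element of size at
least `ρ ^ d`. -/
def IsSpread (C ρ : ℝ) (K : Set ℝ) : Prop :=
  K ⊆ Set.Icc (-C) C ∧ ∃ u ∈ K, ∃ v ∈ K, ρ ≤ |u| ∧ ρ ≤ |u - v|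

variable {C ρ : ℝ} {K : Set ℝ} {k m d : ℕ}

namespace IsSpread

lemma nonempty (hK : IsSpread C ρ K) : K.Nonempty :=
  let ⟨_, u, hu, _⟩ := hK
  ⟨u, hu⟩

lemma exists_mem_sumProdDiff_one (hK : IsSpread C ρ K) (hρ : 0 ≤ ρ) (hd : d ≠ 0) :
    ∃ e ∈ sumProdDiff K 1 d, ρ ^ d ≤ |e| := by
  obtain ⟨-, u, hu, v, hv, hρu, hρuv⟩ := hK
  obtain ⟨d, rfl⟩ := Nat.exists_eq_succ_of_ne_zero hd
  refine ⟨u ^ d * (u - v), pow_mul_mem_sumProdDiff hu d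
    (sub_mem_sumProdDiff_one (by simpa using pow_mem_prodN hu 1)
      (by simpa using pow_mem_prodN hv 1)), ?_⟩
  rw [abs_mul, abs_pow, Nat.succ_eq_add_one, pow_succ]
  gcongr

lemma ofReal_mul_volume_sumProdDiff_le (hK : IsSpread C ρ K) (hρ : 0 ≤ ρ) {N : ℕ} (hm : m ≤ N)
    (hd : d ≤ N) :
    ENNReal.ofReal (ρ ^ (N - d)) * volume (sumProdDiff K m d) ≤ volume (sumProdDiff K N N) := by
  have ⟨_, u, hu, _, _, hρu, _⟩ := hK
  have hsub : u ^ (N - d) • sumProdDiff K m d ⊆ sumProdDiff K N N := by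
    rintro _ ⟨x, hx, rfl⟩
    have hmem := pow_mul_mem_sumProdDiff hu (N - d) hx
    rw [Nat.sub_add_cancel hd] at hmem
    exact sumProdDiff_subset_of_le hK.nonempty hm hmem
  calc ENNReal.ofReal (ρ ^ (N - d)) * volume (sumProdDiff K m d)
    _ ≤ ENNReal.ofReal |u ^ (N - d)| * volume (sumProdDiff K m d) := by
        rw [abs_pow]
        gcongr
    _ = volume (u ^ (N - d) • sumProdDiff K m d) := by simp [Measure.addHaar_smul]
    _ ≤ volume (sumProdDiff K N N) := measure_mono hsub

end IsSpread

lemma exists_int_abs_natCast_mul_sub_le {b c : ℝ} (h : |b| ≤ |c|) (n : ℕ) :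
    ∃ q : ℤ, |q| ≤ n ∧ |n * b - q * c| ≤ |c| := by
  rcases eq_or_ne c 0 with rfl | hc
  · exact ⟨0, by simp, by simp_all⟩
  have hratio : |n * (b / c)| ≤ n := by
    rw [abs_mul, abs_div, Nat.abs_cast]
    exact mul_le_of_le_one_right n.cast_nonneg (div_le_one_of_le₀ h (abs_nonneg c))
  obtain ⟨hlower, hupper⟩ := abs_le.1 hratio
  refine ⟨⌊n * (b / c)⌋, abs_le.2 ⟨Int.le_floor.2 (by push_cast; exact hlower), ?_⟩, ?_⟩
  · exact (Int.floor_mono hupper).trans_eq (Int.floor_natCast n)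
  · have hfract : n * b - ⌊n * (b / c)⌋ * c = Int.fract (n * (b / c)) * c := by
      rw [Int.fract]
      field_simp
    rw [hfract, abs_mul, Int.abs_fract]
    exact mul_le_of_le_one_left (abs_nonneg c) (Int.fract_lt_one _).le

/-- A relation `a ⬝ᵥ x = 0` eliminates the coefficient `a j`: whenever `t = a ⬝ᵥ z`, the vector
`x j • z - z j • x` represents `x j * t` and vanishes at `j`. -/
lemma Icc_subset_dotImage_succAbove {Q P : ℕ} {δ : ℝ} (hK : K.Nonempty) {a x : Fin (k + 1) → ℝ}
    (hsurj : Set.Icc (-1) 1 ⊆ dotImage a (sumProdDiff K m d))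
    (hx : ∀ i, x i ∈ sumProdDiff K P d) (hrel : a ⬝ᵥ x = 0) {j : Fin (k + 1)} (hδ : 0 < δ)
    (hxj : δ ≤ |x j|) (hQ : 1 ≤ Q * δ) :
    Set.Icc (-1) 1 ⊆ dotImage (a ∘ j.succAbove)
      (sumProdDiff K (Q * (2 * (P * m) + 2 * (m * P))) (d + d)) := by
  intro t ht
  have hxj0 : x j ≠ 0 := abs_pos.1 (hδ.trans_le hxj)
  have hQx : 1 ≤ |Q * x j| := by
    rw [abs_mul, Nat.abs_cast]
    exact hQ.trans (by gcongr)
  have hQ0 : (Q : ℝ) ≠ 0 := by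
    rintro h
    norm_num [h] at hQ
  have htQ : t / (Q * x j) ∈ Set.Icc (-1) 1 := by
    rw [Set.mem_Icc, ← abs_le, abs_div]
    exact div_le_one_of_le₀ ((abs_le.2 ht).trans hQx) (abs_nonneg _)
  obtain ⟨z, hz, hzt⟩ := hsurj htQ
  set w := (Q : ℝ) • (x j • z - z j • x) with hw
  have hwt : a ⬝ᵥ w = t := by
    have hzt' : a ⬝ᵥ z = t / (Q * x j) := hzt
    rw [hw, dotProduct_smul, dotProduct_sub, dotProduct_smul, dotProduct_smul, hrel, hzt']
    simp only [smul_eq_mul]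
    field_simp
    ring
  have hwj : w j = 0 := by simp [hw, mul_comm]
  refine ⟨w ∘ j.succAbove, fun i _ => ?_, ?_⟩
  · exact natCast_mul_mem_sumProdDiff hK Q (sub_mem_sumProdDiff
      (mul_mem_sumProdDiff (hx j) (hz _ trivial)) (mul_mem_sumProdDiff (hz j trivial) (hx _)))
  · calc ∑ i, a (j.succAbove i) * w (j.succAbove i) = ∑ i, a i * w i := by
          rw [Fin.sum_univ_succAbove _ j, hwj, mul_zero, zero_add]
      _ = t := hwt

/-- Two representations of one number collide: with `e` an element of size at least `δ`, write
`e * (n * a j - q * a i)`, which is at most `L` for a suitable integer `q`, once as it stands and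
once as `L` times an element of `[-1, 1] ⊆ dotImage a _`. For `n` large the two representations
differ in the `j`-th coordinate. -/
lemma exists_dotProduct_eq_zero_of_Icc_subset_dotImage {L n : ℕ} {δ e : ℝ}
    (hKC : K ⊆ Set.Icc (-C) C) (hK : K.Nonempty) (he : e ∈ sumProdDiff K 1 d) (hδe : δ ≤ |e|)
    (hL : 0 < L) (heL : |e| ≤ L) (hn : L * (2 * (m * C ^ d)) + δ ≤ n * δ)
    {a : Fin (k + 2) → ℝ} (ha : ∀ i, |a i| ≤ 1)
    (hsurj : Set.Icc (-1) 1 ⊆ dotImage a (sumProdDiff K m d)) :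
    ∃ (j : Fin (k + 2)) (x : Fin (k + 2) → ℝ),
      (∀ l, x l ∈ sumProdDiff K (n + n + L * m) d) ∧ a ⬝ᵥ x = 0 ∧ δ ≤ |x j| := by
  obtain ⟨i, j, hij, haij⟩ : ∃ i j : Fin (k + 2), i ≠ j ∧ |a j| ≤ |a i| :=
    (le_total |a 0| |a 1|).elim (fun h => ⟨1, 0, by simp, h⟩) fun h => ⟨0, 1, by simp, h⟩
  obtain ⟨q, hq, hqa⟩ := exists_int_abs_natCast_mul_sub_le haij n
  have hL' : (0 : ℝ) < L := by exact_mod_cast hL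
  obtain ⟨y, hy, hay⟩ : e * (n * a j - q * a i) / L ∈ dotImage a (sumProdDiff K m d) := by
    refine hsurj ?_
    rw [Set.mem_Icc, ← abs_le, abs_div, abs_mul, Nat.abs_cast, div_le_one hL']
    exact (mul_le_of_le_one_right (abs_nonneg e) (hqa.trans (ha i))).trans heL
  let x : Fin (k + 2) → ℝ := Pi.single j (n * e) - Pi.single i (q * e) - (L : ℝ) • y
  refine ⟨j, x, fun l => ?_, ?_, ?_⟩
  · have single_mem {s : ℝ} (p : Fin (k + 2)) (hs : s ∈ sumProdDiff K n d) :
        (Pi.single p s : Fin (k + 2) → ℝ) l ∈ sumProdDiff K n d := by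
      rw [Pi.single_apply]
      split_ifs
      exacts [hs, zero_mem_sumProdDiff hK n d]
    exact sub_mem_sumProdDiff
      (sub_mem_sumProdDiff
        (single_mem j (by simpa using natCast_mul_mem_sumProdDiff hK n he))
        (single_mem i (by simpa using intCast_mul_mem_sumProdDiff hK hq he)))
      (natCast_mul_mem_sumProdDiff hK L (hy l trivial))
  · have hay' : a ⬝ᵥ y = e * (n * a j - q * a i) / L := hay
    rw [dotProduct_sub, dotProduct_sub, dotProduct_single, dotProduct_single, dotProduct_smul,
      hay', smul_eq_mul, mul_div_cancel₀ _ hL'.ne']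
    ring
  · have hxj : x j = n * e - L * y j := by simp [x, hij.symm]
    have hLy : |L * y j| ≤ L * (2 * (m * C ^ d)) := by
      rw [abs_mul, Nat.abs_cast]
      gcongr
      exact abs_le_of_mem_sumProdDiff hKC (hy j trivial)
    rw [hxj]
    calc δ ≤ n * δ - L * (2 * (m * C ^ d)) := by linarith
      _ ≤ |n * e| - |L * y j| := by
          rw [abs_mul (n : ℝ), Nat.abs_cast]
          gcongr
      _ ≤ |n * e - L * y j| := abs_sub_abs_le_abs_sub _ _

lemma exists_Icc_subset_dotImage_of_succ (C : ℝ) (hρ : 0 < ρ) (k m : ℕ) (hd : d ≠ 0) :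
    ∃ m' : ℕ, ∀ K, IsSpread C ρ K → ∀ a : Fin (k + 2) → ℝ, (∀ i, |a i| ≤ 1) →
      Set.Icc (-1) 1 ⊆ dotImage a (sumProdDiff K m d) →
      ∃ a' : Fin (k + 1) → ℝ, (∀ i, |a' i| ≤ 1) ∧
        Set.Icc (-1) 1 ⊆ dotImage a' (sumProdDiff K m' (d + d)) := by
  have hδ : 0 < ρ ^ d := pow_pos hρ d
  obtain ⟨L, hL⟩ := exists_nat_ge (max 1 (2 * C ^ d))
  obtain ⟨hL1, hCL⟩ := max_le_iff.1 hL
  obtain ⟨n, hn⟩ := exists_nat_ge ((L * (2 * (m * C ^ d)) + ρ ^ d) / ρ ^ d)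
  obtain ⟨Q, hQ⟩ := exists_nat_ge (1 / ρ ^ d)
  rw [div_le_iff₀ hδ] at hn hQ
  refine ⟨Q * (2 * ((n + n + L * m) * m) + 2 * (m * (n + n + L * m))),
    fun K hK a ha hsurj => ?_⟩
  obtain ⟨e, he, hδe⟩ := hK.exists_mem_sumProdDiff_one hρ.le hd
  have heL : |e| ≤ L := by
    simpa using (abs_le_of_mem_sumProdDiff hK.1 he).trans (by simpa using hCL)
  obtain ⟨j, x, hx, hrel, hxj⟩ := exists_dotProduct_eq_zero_of_Icc_subset_dotImage hK.1
    hK.nonempty he hδe (by exact_mod_cast hL1) heL hn ha hsurj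
  exact ⟨a ∘ j.succAbove, fun _ => ha _,
    Icc_subset_dotImage_succAbove hK.nonempty hsurj hx hrel hδ hxj hQ⟩

lemma exists_two_le_volume_of_Icc_subset_dotImage (C : ℝ) (hρ : 0 < ρ) (k m : ℕ) (hd : d ≠ 0) :
    ∃ m' : ℕ, ∀ K, IsSpread C ρ K → ∀ a : Fin (k + 1) → ℝ, (∀ i, |a i| ≤ 1) →
      Set.Icc (-1) 1 ⊆ dotImage a (sumProdDiff K m d) →
      2 ≤ volume (sumProdDiff K m' (2 ^ k * d)) := by
  induction k generalizing m d with
  | zero =>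
    refine ⟨m, fun K _ a ha hsurj => ?_⟩
    simpa using two_le_volume_of_Icc_subset_smul (ha 0)
      (hsurj.trans_eq (dotImage_of_unique (ι := Fin 1) a _))
  | succ k ih =>
    obtain ⟨m₁, hstep⟩ := exists_Icc_subset_dotImage_of_succ C hρ k m hd
    obtain ⟨m₂, hrest⟩ := ih m₁ (d := d + d) (by lia)
    refine ⟨m₂, fun K hK a ha hsurj => ?_⟩
    obtain ⟨a', ha', hsurj'⟩ := hstep K hK a ha hsurj
    simpa only [pow_succ, mul_assoc, two_mul] using hrest K hK a' ha' hsurj'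

end Elimination

section Covering

variable {S D : Set ℝ} {M R c h x : ℝ} {m n j q : ℕ}

lemma sumN_subset_sumN_of_le (hD : 0 ∈ D) (hmn : m ≤ n) : sumN m D ⊆ sumN n D := fun x hx => by
  obtain ⟨r, rfl⟩ := Nat.exists_eq_add_of_le hmn
  have hzero : (0 : ℝ) ∈ sumN r D := ⟨0, fun _ => hD, by simp⟩
  simpa using add_mem_sumN hx hzero

lemma exists_mul_mem_sumN_succ_diff (hD : 0 ∈ D) (hh : h ∈ D) (hq : q * h ∉ sumN j D) :
    ∃ i ≤ q, i * h ∈ sumN (j + 1) D \ sumN j D := by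
  by_contra! hcon
  simp only [Set.mem_sdiff, not_and, not_not] at hcon
  have hmem (i : ℕ) (hi : i ≤ q) : i * h ∈ sumN j D := by
    induction i with
    | zero => exact ⟨0, fun _ => hD, by simp⟩
    | succ i ih =>
      apply hcon (i + 1) hi
      rw [Nat.cast_succ, add_one_mul]
      exact add_mem_sumN (ih (by lia)) (subset_sumN_one hh)
  exact hq (hmem q le_rfl)

lemma exists_mem_sumN_succ_diff (hD : D ∈ nhds 0) (hx : x ∉ sumN j D) :
    ∃ y, |y| ≤ |x| ∧ y ∈ sumN (j + 1) D \ sumN j D := by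
  obtain ⟨q, hq, hstep⟩ : ∃ q : ℕ, 0 < q ∧ x / q ∈ D :=
    ((Filter.eventually_gt_atTop 0).and
      ((tendsto_const_div_atTop_nhds_zero_nat x).eventually hD)).exists
  have hq' : (0 : ℝ) < q := Nat.cast_pos.2 hq
  rw [← mul_div_cancel₀ x hq'.ne'] at hx
  obtain ⟨i, hi, hmem⟩ := exists_mul_mem_sumN_succ_diff (mem_of_mem_nhds hD) hstep hx
  refine ⟨i * (x / q), ?_, hmem⟩
  have hiq : |(i : ℝ) / q| ≤ 1 := by
    rw [abs_of_nonneg (by positivity), div_le_one hq']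
    exact_mod_cast hi
  rw [← mul_div_assoc, mul_div_right_comm, abs_mul]
  exact mul_le_of_le_one_left (abs_nonneg x) hiq

lemma card_mul_volume_le_of_disjoint {ι : Type*} [Fintype ι] {y : ι → ℝ} (hS : MeasurableSet S)
    (hSM : S ⊆ Set.Icc (-M) M) (hy : ∀ i, y i ∈ Set.Icc (-R) R)
    (hdisj : Pairwise (Function.onFun Disjoint fun i => y i +ᵥ S)) :
    Fintype.card ι * volume S ≤ ENNReal.ofReal (2 * (M + R)) :=
  calc Fintype.card ι * volume S = volume (⋃ i, y i +ᵥ S) := by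
        rw [measure_iUnion hdisj fun i => hS.const_vadd (y i)]
        simp [measure_vadd]
    _ ≤ volume (Set.Icc (-R + -M) (R + M)) := by
        refine measure_mono (Set.iUnion_subset fun i => ?_)
        rintro _ ⟨s, hs, rfl⟩
        exact ⟨add_le_add (hy i).1 (hSM hs).1, add_le_add (hy i).2 (hSM hs).2⟩
    _ = ENNReal.ofReal (2 * (M + R)) := by
        rw [Real.volume_Icc]
        ring_nf

/-- If `z` were not reached, then stepping from `0` to `z` along a small element of `S - S` would
leave each `sumN j (S - S)` with `j ≤ 2 * n`; the translates of `S` by every other exit point are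
pairwise disjoint, and there is no room for `n` of them. -/
lemma Icc_subset_sumN_sub (hS : MeasurableSet S) (hSM : S ⊆ Set.Icc (-M) M) (hc : 0 < c)
    (hvol : ENNReal.ofReal c ≤ volume S) (hn : 2 * (M + R) < n * c) :
    Set.Icc (-R) R ⊆ sumN (2 * n) (S - S) := by
  have hpos : 0 < volume S := (ENNReal.ofReal_pos.2 hc).trans_le hvol
  have hnhds : S - S ∈ nhds 0 := Measure.sub_mem_nhds_zero_of_addHaar_pos volume S hS hpos
  have hzero : 0 ∈ S - S := mem_of_mem_nhds hnhds
  intro z hz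
  by_contra hzS
  have hexit (j : ℕ) (hj : j ≤ 2 * n) :
      ∃ y ∈ Set.Icc (-R) R, y ∈ sumN (j + 1) (S - S) ∧ y ∉ sumN j (S - S) := by
    obtain ⟨y, hyz, hmem⟩ := exists_mem_sumN_succ_diff hnhds
      fun h => hzS (sumN_subset_sumN_of_le hzero hj h)
    exact ⟨y, abs_le.1 (hyz.trans (abs_le.2 hz)), hmem⟩
  choose! y hyR hy_succ hy_not using hexit
  have hdisj : Pairwise (Function.onFun Disjoint fun i : Fin n => y (2 * i) +ᵥ S) := by
    refine (pairwise_disjoint_on _).2 fun i j hij => Set.disjoint_left.2 ?_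
    rintro _ ⟨s, hs, rfl⟩ ⟨s', hs', heq⟩
    have hyj : y (2 * j) = y (2 * i) + (s - s') := by
      rw [← add_sub_assoc]
      exact eq_sub_of_add_eq heq
    apply hy_not (2 * j) (by lia)
    rw [hyj]
    exact sumN_subset_sumN_of_le hzero (by lia) (add_mem_sumN (hy_succ (2 * i) (by lia))
      (subset_sumN_one (Set.sub_mem_sub hs hs')))
  have hroom : ENNReal.ofReal (n * c) ≤ ENNReal.ofReal (2 * (M + R)) :=
    calc ENNReal.ofReal (n * c) = n * ENNReal.ofReal c := by
          rw [ENNReal.ofReal_mul n.cast_nonneg, ENNReal.ofReal_natCast]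
      _ ≤ n * volume S := by gcongr
      _ ≤ ENNReal.ofReal (2 * (M + R)) := by
          simpa using card_mul_volume_le_of_disjoint hS hSM (fun i => hyR _ (by lia)) hdisj
  have hMR : 0 ≤ 2 * (M + R) := by
    obtain ⟨s, hs⟩ := nonempty_of_measure_ne_zero hpos.ne'
    linarith [(abs_nonneg s).trans (abs_le.2 (hSM hs)), (abs_nonneg z).trans (abs_le.2 hz)]
  exact hn.not_ge ((ENNReal.ofReal_le_ofReal_iff hMR).1 hroom)

end Covering

section Frostman

/-- The measure `μ` satisfies the Frostman condition `μ (B(x, r)) ≤ C * r ^ s` at all points `x`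
of `K`. -/
def IsFrostmanOn {X : Type*} [PseudoMetricSpace X] [MeasurableSpace X] (μ : Measure X) (K : Set X)
    (s C : ℝ) : Prop :=
  ∀ x ∈ K, ∀ r : ℝ, 0 < r → μ (Metric.closedBall x r) ≤ ENNReal.ofReal (C * r ^ s)

variable {X : Type*} [PseudoMetricSpace X] [MeasurableSpace X] {μ : Measure X} {K : Set X}
  {s C : ℝ}

lemma IsFrostmanOn.pi [SigmaFinite μ] (h : IsFrostmanOn μ K s C) (hC : 0 ≤ C) (ι : Type*)
    [Fintype ι] :
    IsFrostmanOn (Measure.pi fun _ : ι => μ) (Set.univ.pi fun _ => K) (s * Fintype.card ι)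
      (C ^ Fintype.card ι) := by
  intro x hx r hr
  calc Measure.pi (fun _ : ι => μ) (Metric.closedBall x r)
    _ = ∏ i, μ (Metric.closedBall (x i) r) := by
        rw [closedBall_pi x hr.le, Measure.pi_pi]
    _ ≤ ∏ _i : ι, ENNReal.ofReal (C * r ^ s) :=
        Finset.prod_le_prod' fun i _ => h (x i) (hx i trivial) r hr
    _ = ENNReal.ofReal (C ^ Fintype.card ι * r ^ (s * Fintype.card ι)) := by
        rw [Finset.prod_const, Finset.card_univ, ← ENNReal.ofReal_pow (by positivity), mul_pow,
          Real.rpow_mul hr.le, Real.rpow_natCast]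

lemma le_one_add_tsum_indicator_two_pow (u : ℝ≥0∞) :
    u ≤ 1 + ∑' n : ℕ, (Set.Ici ((2 : ℝ≥0∞) ^ n)).indicator (fun _ => 2 ^ (n + 1)) u := by
  rcases le_total u 1 with hu | hu
  · exact hu.trans le_self_add
  induction u with
  | top =>
    have hterm (n : ℕ) :
        (1 : ℝ≥0∞) ≤ (Set.Ici ((2 : ℝ≥0∞) ^ n)).indicator (fun _ => 2 ^ (n + 1)) ⊤ := by
      rw [Set.indicator_of_mem (Set.mem_Ici.2 le_top)]
      exact one_le_pow₀ one_le_two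
    calc (⊤ : ℝ≥0∞) = ∑' _ : ℕ, 1 := (ENNReal.tsum_const_eq_top_of_ne_zero one_ne_zero).symm
      _ ≤ _ := (ENNReal.tsum_le_tsum hterm).trans le_add_self
  | coe u =>
    obtain ⟨n, hn, hn'⟩ := exists_nat_pow_near (ENNReal.one_le_coe_iff.1 hu) one_lt_two
    have hmem : (u : ℝ≥0∞) ∈ Set.Ici (2 ^ n) := by
      rw [Set.mem_Ici]
      exact_mod_cast hn
    calc (u : ℝ≥0∞) ≤ 2 ^ (n + 1) := by exact_mod_cast hn'.le
      _ = (Set.Ici ((2 : ℝ≥0∞) ^ n)).indicator (fun _ => 2 ^ (n + 1)) u := by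
          rw [Set.indicator_of_mem hmem]
      _ ≤ _ := (ENNReal.le_tsum n).trans le_add_self

lemma lintegral_le_measure_univ_add_tsum {α : Type*} [MeasurableSpace α] (μ : Measure α)
    {f : α → ℝ≥0∞} (hf : Measurable f) :
    ∫⁻ x, f x ∂μ ≤ μ Set.univ + ∑' n : ℕ, 2 ^ (n + 1) * μ {x | 2 ^ n ≤ f x} := by
  have hmeas (n : ℕ) : MeasurableSet {x | 2 ^ n ≤ f x} := measurableSet_le measurable_const hf
  calc ∫⁻ x, f x ∂μ
    _ ≤ ∫⁻ x, 1 + ∑' n : ℕ, {x | 2 ^ n ≤ f x}.indicator (fun _ => 2 ^ (n + 1)) x ∂μ :=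
        lintegral_mono fun x => le_one_add_tsum_indicator_two_pow (f x)
    _ = μ Set.univ + ∑' n : ℕ, 2 ^ (n + 1) * μ {x | 2 ^ n ≤ f x} := by
        rw [lintegral_add_left measurable_const, lintegral_one, lintegral_tsum fun n =>
          (measurable_const.indicator (hmeas n)).aemeasurable]
        simp_rw [lintegral_indicator_const (hmeas _)]

lemma IsFrostmanOn.lintegral_inv_edist_le [OpensMeasurableSpace X] [IsProbabilityMeasure μ]
    (h : IsFrostmanOn μ K s C) (hs : 1 < s) (hC : 0 ≤ C) {x : X} (hx : x ∈ K) :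
    ∫⁻ y, (edist x y)⁻¹ ∂μ ≤ ENNReal.ofReal (1 + 2 * C / (1 - 2 ^ (1 - s))) := by
  have hball (n : ℕ) : {y | 2 ^ n ≤ (edist x y)⁻¹} = Metric.closedBall x ((2⁻¹ : ℝ) ^ n) := by
    ext y
    rw [Set.mem_ofPred, ENNReal.le_inv_iff_le_inv, Metric.mem_closedBall', dist_edist,
      ← ENNReal.le_ofReal_iff_toReal_le (edist_ne_top x y) (by positivity),
      ENNReal.ofReal_pow (by positivity), ENNReal.ofReal_inv_of_pos two_pos, ENNReal.inv_pow]
    simp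
  have hratio : (2 : ℝ) ^ (1 - s) < 1 :=
    Real.rpow_lt_one_of_one_lt_of_neg one_lt_two (by linarith)
  have hterm (n : ℕ) : 2 ^ (n + 1) * μ {y | 2 ^ n ≤ (edist x y)⁻¹} ≤
      ENNReal.ofReal (2 * C * (2 ^ (1 - s)) ^ n) := by
    calc 2 ^ (n + 1) * μ {y | 2 ^ n ≤ (edist x y)⁻¹}
      _ ≤ ENNReal.ofReal (2 ^ (n + 1)) * ENNReal.ofReal (C * ((2⁻¹ : ℝ) ^ n) ^ s) := by
          rw [hball, ENNReal.ofReal_pow zero_le_two, ENNReal.ofReal_ofNat]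
          gcongr
          exact h x hx _ (by positivity)
      _ = ENNReal.ofReal (2 * C * (2 ^ (1 - s)) ^ n) := by
          rw [← ENNReal.ofReal_mul (by positivity), ← Real.rpow_pow_comm (by positivity),
            Real.inv_rpow zero_le_two, Real.rpow_sub two_pos, Real.rpow_one, div_pow, inv_pow]
          ring_nf
  calc ∫⁻ y, (edist x y)⁻¹ ∂μ
    _ ≤ μ Set.univ + ∑' n : ℕ, 2 ^ (n + 1) * μ {y | 2 ^ n ≤ (edist x y)⁻¹} :=
        lintegral_le_measure_univ_add_tsum μ (measurable_edist_right.inv)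
    _ ≤ 1 + ∑' n : ℕ, ENNReal.ofReal (2 * C * (2 ^ (1 - s)) ^ n) := by
        rw [measure_univ]
        gcongr with n
        exact hterm n
    _ = ENNReal.ofReal (1 + 2 * C / (1 - 2 ^ (1 - s))) := by
        rw [← ENNReal.ofReal_tsum_of_nonneg (fun n => by positivity)
          ((summable_geometric_of_lt_one (by positivity) hratio).mul_left _), tsum_mul_left,
          tsum_geometric_of_lt_one (by positivity) hratio, ← div_eq_mul_inv,
          ENNReal.ofReal_add zero_le_one (div_nonneg (by positivity) (by linarith)),
          ENNReal.ofReal_one]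

lemma exists_isSpread_of_isFrostmanOn (C R : ℝ) {κ : ℝ} (hκ : 0 < κ) :
    ∃ ρ > 0, ∀ (μ : Measure ℝ) [IsProbabilityMeasure μ] (K : Set ℝ), K ⊆ Set.Icc (-R) R →
      (∀ᵐ x ∂μ, x ∈ K) → IsFrostmanOn μ K κ C → IsSpread R ρ K := by
  obtain ⟨ρ, hρ, hsmall⟩ : ∃ ρ > 0, C * (2 * ρ) ^ κ < 1 := by
    have hlim : Filter.Tendsto (fun ρ : ℝ => C * (2 * ρ) ^ κ) (nhdsWithin 0 (Set.Ioi 0))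
        (nhds 0) := by
      have hcont : Continuous fun ρ : ℝ => C * (2 * ρ) ^ κ :=
        continuous_const.mul ((continuous_const.mul continuous_id).rpow_const fun _ =>
          Or.inr hκ.le)
      simpa [Real.zero_rpow hκ.ne'] using hcont.tendsto 0 |>.mono_left nhdsWithin_le_nhds
    exact (eventually_mem_nhdsWithin.and (hlim.eventually_lt_const one_pos)).exists
  refine ⟨ρ, hρ, fun μ _ K hKR hμK h => ⟨hKR, ?_⟩⟩
  obtain ⟨w, hw⟩ := hμK.exists
  obtain ⟨v, hvK, hv⟩ : ∃ v ∈ K, v ∉ Metric.closedBall w (2 * ρ) := by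
    by_contra! hsub
    have hone : (1 : ℝ≥0∞) ≤ ENNReal.ofReal (C * (2 * ρ) ^ κ) :=
      calc 1 = μ Set.univ := measure_univ.symm
        _ ≤ μ (Metric.closedBall w (2 * ρ)) :=
            measure_mono_ae (hμK.mono fun x hx _ => hsub x hx)
        _ ≤ _ := h w hw _ (by positivity)
    exact (ENNReal.one_le_ofReal.1 hone).not_gt hsmall
  rw [Metric.mem_closedBall, Real.dist_eq, not_le] at hv
  rcases le_total ρ |w| with hρw | hρw
  · exact ⟨w, hw, v, hvK, hρw, by rw [abs_sub_comm]; linarith⟩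
  · exact ⟨v, hvK, w, hw, by linarith [abs_sub v w], by linarith⟩

end Frostman

section Projection

section Thickening

variable {X : Type*} [PseudoMetricSpace X] [SecondCountableTopology X] [MeasurableSpace X]
  [OpensMeasurableSpace X] {r : ℝ}

lemma measurable_measure_closedBall (ν : Measure X) [SFinite ν] (r : ℝ) :
    Measurable fun t => ν (Metric.closedBall t r) := by
  have hmeas : MeasurableSet {p : X × X | dist p.2 p.1 ≤ r} :=
    measurableSet_le (by fun_prop) measurable_const
  exact measurable_measure_prodMk_left hmeas

lemma lintegral_measure_closedBall_comm (μ ν : Measure X) [SFinite μ] [SFinite ν] (r : ℝ) :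
    ∫⁻ t, ν (Metric.closedBall t r) ∂μ = ∫⁻ x, μ (Metric.closedBall x r) ∂ν := by
  have hmeas : MeasurableSet {p : X × X | dist p.2 p.1 ≤ r} :=
    measurableSet_le (by fun_prop) measurable_const
  calc ∫⁻ t, ν (Metric.closedBall t r) ∂μ
    _ = (μ.prod ν) {p | dist p.2 p.1 ≤ r} := (Measure.prod_apply hmeas).symm
    _ = ∫⁻ x, μ (Metric.closedBall x r) ∂ν := by
        rw [Measure.prod_apply_symm hmeas]
        simp only [Set.preimage_ofPred_eq, Metric.closedBall, dist_comm]

lemma lintegral_sq_measure_closedBall_le (μ ν : Measure X) [SFinite μ] [SFinite ν] {V : ℝ≥0∞}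
    (hV : ∀ x, μ (Metric.closedBall x r) ≤ V) :
    ∫⁻ t, ν (Metric.closedBall t r) ^ 2 ∂μ ≤ V * (ν.prod ν) {p | dist p.1 p.2 ≤ 2 * r} := by
  have hdiag : Measurable fun t : X => (t, t) := by fun_prop
  have hclose : MeasurableSet {p : X × X | dist p.1 p.2 ≤ 2 * r} :=
    measurableSet_le (by fun_prop) measurable_const
  have hpoint (p : X × X) : μ.map (fun t => (t, t)) (Metric.closedBall p r) ≤
      {p : X × X | dist p.1 p.2 ≤ 2 * r}.indicator (fun _ => V) p := by
    rw [Measure.map_apply hdiag measurableSet_closedBall, ← closedBall_prod_same]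
    by_cases hp : p ∈ {p : X × X | dist p.1 p.2 ≤ 2 * r}
    · rw [Set.indicator_of_mem hp]
      exact (measure_mono fun t ht => ht.1).trans (hV p.1)
    · rw [Set.indicator_of_notMem hp, nonpos_iff_eq_zero]
      convert measure_empty (μ := μ)
      refine Set.eq_empty_of_forall_notMem fun t ht => hp ?_
      rw [Set.mem_ofPred]
      linarith [dist_triangle_left p.1 p.2 t, Metric.mem_closedBall.1 ht.1,
        Metric.mem_closedBall.1 ht.2]
  calc ∫⁻ t, ν (Metric.closedBall t r) ^ 2 ∂μ
    _ = ∫⁻ t, (ν.prod ν) (Metric.closedBall (t, t) r) ∂μ := by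
        simp_rw [← closedBall_prod_same, Measure.prod_prod, sq]
    _ = ∫⁻ q, (ν.prod ν) (Metric.closedBall q r) ∂μ.map fun t => (t, t) :=
        (lintegral_map (measurable_measure_closedBall _ r) hdiag).symm
    _ = ∫⁻ p, μ.map (fun t => (t, t)) (Metric.closedBall p r) ∂ν.prod ν :=
        lintegral_measure_closedBall_comm _ _ r
    _ ≤ ∫⁻ p, {p : X × X | dist p.1 p.2 ≤ 2 * r}.indicator (fun _ => V) p ∂ν.prod ν :=
        lintegral_mono hpoint
    _ = V * (ν.prod ν) {p | dist p.1 p.2 ≤ 2 * r} := lintegral_indicator_const hclose V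

lemma sq_lintegral_le_measure_mul_lintegral_sq {α : Type*} [MeasurableSpace α] {μ : Measure α}
    {s : Set α} {f : α → ℝ≥0∞} (hs : MeasurableSet s) (hf : AEMeasurable f μ)
    (hfs : ∀ x ∉ s, f x = 0) : (∫⁻ x, f x ∂μ) ^ 2 ≤ μ s * ∫⁻ x, f x ^ 2 ∂μ := by
  have hrestrict : ∫⁻ x, f x ∂μ = ∫⁻ x in s, f x ∂μ := by
    rw [← lintegral_indicator hs, Set.indicator_eq_self.2 (Function.support_subset_iff'.2 hfs)]
  have hholder : ∫⁻ x in s, f x ∂μ ≤ μ s ^ (1 / 2 : ℝ) * (∫⁻ x in s, f x ^ 2 ∂μ) ^ (1 / 2 : ℝ) := by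
    simpa using ENNReal.lintegral_mul_le_Lp_mul_Lq (μ.restrict s) Real.HolderConjugate.two_two
      (aemeasurable_const (b := 1)) hf.restrict
  calc (∫⁻ x, f x ∂μ) ^ 2
    _ ≤ (μ s ^ (1 / 2 : ℝ) * (∫⁻ x in s, f x ^ 2 ∂μ) ^ (1 / 2 : ℝ)) ^ 2 := by
        rw [hrestrict]
        gcongr
    _ = μ s * ∫⁻ x in s, f x ^ 2 ∂μ := by
        rw [← ENNReal.mul_rpow_of_nonneg _ _ (by norm_num), ← ENNReal.rpow_natCast,
          ← ENNReal.rpow_mul]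
        norm_num
    _ ≤ μ s * ∫⁻ x, f x ^ 2 ∂μ := by
        gcongr
        exact Measure.restrict_le_self

/-- Cauchy-Schwarz for `t ↦ m (B(t, r))`, which vanishes off the thickening of `S`, has
integral `2 * r`, and has its second moment controlled by `m.prod m` near the diagonal. -/
lemma ofReal_le_volume_cthickening_mul (m : Measure ℝ) [IsProbabilityMeasure m] {S : Set ℝ}
    (hS : ∀ᵐ x ∂m, x ∈ S) (hr : 0 < r) :
    ENNReal.ofReal (2 * r) ≤
      volume (Metric.cthickening r S) * (m.prod m) {p | dist p.1 p.2 ≤ 2 * r} := by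
  have hfirst : ∫⁻ t, m (Metric.closedBall t r) = ENNReal.ofReal (2 * r) := by
    simp [lintegral_measure_closedBall_comm volume m, Real.volume_closedBall]
  have hzero (t : ℝ) (ht : t ∉ Metric.cthickening r S) : m (Metric.closedBall t r) = 0 :=
    measure_mono_null (fun x hx hxS =>
      ht (Metric.mem_cthickening_of_dist_le t x r S hxS (Metric.mem_closedBall'.1 hx))) hS
  have hsq := (sq_lintegral_le_measure_mul_lintegral_sq
    Metric.isClosed_cthickening.measurableSet (measurable_measure_closedBall m r).aemeasurable
    hzero).trans (mul_le_mul_right (lintegral_sq_measure_closedBall_le volume m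
      fun x => (Real.volume_closedBall x r).le) _)
  rw [hfirst, mul_left_comm, sq] at hsq
  exact (ENNReal.mul_le_mul_iff_right (by simpa using hr) ENNReal.ofReal_ne_top).1 hsq

lemma inv_le_volume_of_frequently (m : Measure ℝ) [IsProbabilityMeasure m] {S : Set ℝ}
    (hS : IsCompact S) (hmS : ∀ᵐ x ∂m, x ∈ S) {B : ℝ≥0∞}
    (h : ∃ᶠ δ in nhdsWithin 0 (Set.Ioi 0),
      (m.prod m) {p | dist p.1 p.2 ≤ δ} ≤ ENNReal.ofReal δ * B) :
    B⁻¹ ≤ volume S := by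
  have hlim : Filter.Tendsto (fun δ : ℝ => volume (Metric.cthickening (δ / 2) S))
      (nhdsWithin 0 (Set.Ioi 0)) (nhds (volume S)) := by
    have hhalf : Filter.Tendsto (fun δ : ℝ => δ / 2) (nhds 0) (nhds 0) := by
      simpa using (continuous_id.div_const (2 : ℝ)).tendsto 0
    exact (tendsto_measure_cthickening_of_isCompact hS).comp (hhalf.mono_left nhdsWithin_le_nhds)
  refine ge_of_tendsto_of_frequently hlim ?_
  refine (h.and_eventually self_mem_nhdsWithin).mono fun δ ⟨hδB, hδ⟩ => ?_
  have hthick := ofReal_le_volume_cthickening_mul m hmS (half_pos hδ)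
  rw [mul_div_cancel₀ δ two_ne_zero] at hthick
  have hone : 1 ≤ B * volume (Metric.cthickening (δ / 2) S) := by
    refine (ENNReal.mul_le_mul_iff_right (by simpa using hδ) ENNReal.ofReal_ne_top).1
      (?_ : ENNReal.ofReal δ * 1 ≤ _)
    calc ENNReal.ofReal δ * 1
      _ ≤ volume (Metric.cthickening (δ / 2) S) * (ENNReal.ofReal δ * B) := by
          rw [mul_one]
          exact hthick.trans (by gcongr)
      _ = _ := by ring
  rw [ENNReal.inv_le_iff_le_mul]
  · exact hone
  · rintro - rfl
    simp at hone
  · rintro - h0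
    simp [h0] at hone

end Thickening

section Slab

variable {k : ℕ} {δ : ℝ}

lemma volume_abs_mul_add_le (hδ : 0 < δ) (c w : ℝ) :
    volume {t : ℝ | |t * c + w| ≤ δ} ≤ ENNReal.ofReal (2 * δ) * ‖c‖ₑ⁻¹ := by
  rcases eq_or_ne c 0 with rfl | hc
  · simp [ENNReal.mul_top, hδ]
  have hball : {t : ℝ | |t * c + w| ≤ δ} = Metric.closedBall (-w / c) (δ / |c|) := by
    ext t
    rw [Metric.mem_closedBall, Real.dist_eq, le_div_iff₀ (abs_pos.2 hc), ← abs_mul, sub_mul,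
      div_mul_cancel₀ _ hc, sub_neg_eq_add, Set.mem_ofPred]
  rw [hball, Real.volume_closedBall, Real.enorm_eq_ofReal_abs,
    ← ENNReal.ofReal_inv_of_pos (abs_pos.2 hc), ← ENNReal.ofReal_mul (by positivity),
    ← mul_div_assoc, div_eq_mul_inv]

lemma volume_Icc_inter_abs_dotProduct_le_apply (hδ : 0 < δ) (z : Fin (k + 1) → ℝ)
    (i : Fin (k + 1)) :
    volume (Set.Icc 0 1 ∩ {a | |a ⬝ᵥ z| ≤ δ}) ≤ ENNReal.ofReal (2 * δ) * ‖z i‖ₑ⁻¹ := by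
  set box := Set.Icc (0 : Fin k → ℝ) 1
  set slab : Set (ℝ × (Fin k → ℝ)) := {p | |p.1 * z i + ∑ j, p.2 j * z (i.succAbove j)| ≤ δ}
  have hmeas : MeasurableSet (Prod.snd ⁻¹' box ∩ slab) :=
    (measurable_snd measurableSet_Icc).inter (measurableSet_le (by fun_prop) measurable_const)
  have hsub : Set.Icc 0 1 ∩ {a | |a ⬝ᵥ z| ≤ δ} ⊆
      MeasurableEquiv.piFinSuccAbove (fun _ => ℝ) i ⁻¹' (Prod.snd ⁻¹' box ∩ slab) := by
    rintro a ⟨ha, ha'⟩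
    rw [Set.mem_ofPred, dotProduct, Fin.sum_univ_succAbove _ i] at ha'
    exact ⟨⟨fun j => ha.1 _, fun j => ha.2 _⟩, ha'⟩
  have hfiber (b : Fin k → ℝ) : volume ((fun t : ℝ => (t, b)) ⁻¹' (Prod.snd ⁻¹' box ∩ slab)) ≤
      box.indicator (fun _ => ENNReal.ofReal (2 * δ) * ‖z i‖ₑ⁻¹) b := by
    by_cases hb : b ∈ box
    · rw [Set.indicator_of_mem hb]
      exact (measure_mono fun t ht => ht.2).trans
        (volume_abs_mul_add_le hδ (z i) (∑ j, b j * z (i.succAbove j)))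
    · simp [Set.preimage_inter, Set.preimage_preimage, hb]
  calc volume (Set.Icc 0 1 ∩ {a | |a ⬝ᵥ z| ≤ δ})
    _ ≤ volume (Prod.snd ⁻¹' box ∩ slab) :=
        (measure_mono hsub).trans_eq
          ((volume_preserving_piFinSuccAbove (fun _ => ℝ) i).measure_preimage
            hmeas.nullMeasurableSet)
    _ ≤ ∫⁻ b, box.indicator (fun _ => ENNReal.ofReal (2 * δ) * ‖z i‖ₑ⁻¹) b := by
        rw [Measure.volume_eq_prod, Measure.prod_apply_symm hmeas]
        exact lintegral_mono hfiber
    _ = ENNReal.ofReal (2 * δ) * ‖z i‖ₑ⁻¹ := by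
        simp [lintegral_indicator_const measurableSet_Icc, box, Real.volume_Icc_pi]

lemma volume_Icc_inter_abs_dotProduct_le (hδ : 0 < δ) (z : Fin k → ℝ) :
    volume (Set.Icc 0 1 ∩ {a | |a ⬝ᵥ z| ≤ δ}) ≤ ENNReal.ofReal (2 * δ) * ‖z‖ₑ⁻¹ := by
  rcases k with - | k
  · have htop : ENNReal.ofReal (2 * δ) * ‖z‖ₑ⁻¹ = ∞ := by
      rw [Subsingleton.elim z 0, enorm_zero, ENNReal.inv_zero, ENNReal.mul_top (by simpa using hδ)]
    exact htop ▸ le_top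
  · obtain ⟨i, hi⟩ := Finite.exists_max fun i => ‖z i‖
    have hzi : ‖z‖ₑ = ‖z i‖ₑ := by
      rw [← enorm_norm z, ← enorm_norm (z i), le_antisymm
        ((pi_norm_le_iff_of_nonneg (norm_nonneg _)).2 hi) (norm_le_pi_norm z i)]
    exact hzi ▸ volume_Icc_inter_abs_dotProduct_le_apply hδ z i

lemma measurableSet_abs_dotProduct_sub_le (k : ℕ) (δ : ℝ) :
    MeasurableSet {q : (Fin k → ℝ) × ((Fin k → ℝ) × (Fin k → ℝ)) |
      |q.1 ⬝ᵥ (q.2.1 - q.2.2)| ≤ δ} :=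
  measurableSet_le (by unfold dotProduct; fun_prop) measurable_const

lemma lintegral_measure_abs_dotProduct_le (hδ : 0 < δ) (ν : Measure (Fin k → ℝ)) [SFinite ν] :
    ∫⁻ a in Set.Icc 0 1, (ν.prod ν) {p | |a ⬝ᵥ (p.1 - p.2)| ≤ δ} ≤
      ENNReal.ofReal (2 * δ) * ∫⁻ x, ∫⁻ y, (edist x y)⁻¹ ∂ν ∂ν := by
  have hmeas := measurableSet_abs_dotProduct_sub_le k δ
  calc ∫⁻ a in Set.Icc 0 1, (ν.prod ν) {p | |a ⬝ᵥ (p.1 - p.2)| ≤ δ}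
    _ = ∫⁻ p, volume.restrict (Set.Icc 0 1) {a | |a ⬝ᵥ (p.1 - p.2)| ≤ δ} ∂ν.prod ν := by
        exact (Measure.prod_apply hmeas).symm.trans (Measure.prod_apply_symm hmeas)
    _ ≤ ∫⁻ p, ENNReal.ofReal (2 * δ) * (edist p.1 p.2)⁻¹ ∂ν.prod ν := by
        refine lintegral_mono fun p => ?_
        rw [Measure.restrict_apply' measurableSet_Icc, Set.inter_comm, edist_eq_enorm_sub]
        exact volume_Icc_inter_abs_dotProduct_le hδ _
    _ = ENNReal.ofReal (2 * δ) * ∫⁻ x, ∫⁻ y, (edist x y)⁻¹ ∂ν ∂ν := by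
        rw [lintegral_const_mul _ (by fun_prop), lintegral_prod _ (by fun_prop)]

end Slab

lemma exists_frequently_lt_of_setLIntegral_le {α : Type*} [MeasurableSpace α] {μ : Measure α}
    {s : Set α} (hs : MeasurableSet s) (hμs : μ s = 1) {F : ℕ → α → ℝ≥0∞}
    (hF : ∀ n, Measurable (F n)) {A B : ℝ≥0∞} (hFA : ∀ n, ∫⁻ a in s, F n a ∂μ ≤ A)
    (hAB : A < B) : ∃ a ∈ s, ∃ᶠ n in Filter.atTop, F n a < B := by
  have : IsProbabilityMeasure (μ.restrict s) := ⟨by rwa [Measure.restrict_apply_univ]⟩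
  have hfatou : ∫⁻ a in s, Filter.liminf (fun n => F n a) Filter.atTop ∂μ ≤ A :=
    (lintegral_liminf_le hF).trans
      (Filter.liminf_le_of_frequently_le' (Filter.Frequently.of_forall hFA))
  obtain ⟨a, has, ha⟩ := exists_notMem_null_le_lintegral (μ := μ.restrict s) (N := sᶜ)
    (Measurable.liminf hF).aemeasurable (by simp [Measure.restrict_apply' hs])
  exact ⟨a, not_not.1 has,
    Filter.frequently_lt_of_liminf_lt (by isBoundedDefault) ((ha.trans hfatou).trans_lt hAB)⟩

lemma inv_le_volume_dotProduct_image_of_frequently {k : ℕ} {E : Set (Fin k → ℝ)}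
    (hE : IsCompact E) (ν : Measure (Fin k → ℝ)) [IsProbabilityMeasure ν]
    (hνE : ∀ᵐ x ∂ν, x ∈ E) {a : Fin k → ℝ} {B : ℝ≥0∞}
    (h : ∃ᶠ δ in nhdsWithin 0 (Set.Ioi 0),
      (ν.prod ν) {p | |a ⬝ᵥ (p.1 - p.2)| ≤ δ} ≤ ENNReal.ofReal δ * B) :
    B⁻¹ ≤ volume ((a ⬝ᵥ ·) '' E) := by
  have hcont : Continuous fun x : Fin k → ℝ => a ⬝ᵥ x := by fun_prop
  have hprod (δ : ℝ) : ((ν.map (a ⬝ᵥ ·)).prod (ν.map (a ⬝ᵥ ·))) {p | dist p.1 p.2 ≤ δ} =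
      (ν.prod ν) {p | |a ⬝ᵥ (p.1 - p.2)| ≤ δ} := by
    rw [Measure.map_prod_map _ _ hcont.measurable hcont.measurable,
      Measure.map_apply (by fun_prop) (measurableSet_le (by fun_prop) measurable_const)]
    simp [Real.dist_eq, dotProduct_sub]
  have : IsProbabilityMeasure (ν.map (a ⬝ᵥ ·)) :=
    Measure.isProbabilityMeasure_map hcont.aemeasurable
  refine inv_le_volume_of_frequently (ν.map (a ⬝ᵥ ·)) (hE.image hcont) ?_ (by simpa only [hprod])
  refine (ae_map_iff hcont.aemeasurable (hE.image hcont).measurableSet).2 ?_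
  exact hνE.mono fun x hx => Set.mem_image_of_mem _ hx

/-- A quantitative form of Marstrand's projection theorem; the double integral is the `1`-energy
of `ν`. -/
lemma exists_inv_le_volume_dotProduct_image {k : ℕ} {E : Set (Fin k → ℝ)} (hE : IsCompact E)
    (ν : Measure (Fin k → ℝ)) [IsProbabilityMeasure ν] (hνE : ∀ᵐ x ∂ν, x ∈ E) {B : ℝ≥0∞}
    (hB : 2 * ∫⁻ x, ∫⁻ y, (edist x y)⁻¹ ∂ν ∂ν < B) :
    ∃ a ∈ Set.Icc 0 1, B⁻¹ ≤ volume ((a ⬝ᵥ ·) '' E) := by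
  set F : ℕ → (Fin k → ℝ) → ℝ≥0∞ := fun n a =>
    ENNReal.ofReal (n + 1) * (ν.prod ν) {p | |a ⬝ᵥ (p.1 - p.2)| ≤ 1 / (n + 1)}
  have hslab (n : ℕ) :
      Measurable fun a : Fin k → ℝ => (ν.prod ν) {p | |a ⬝ᵥ (p.1 - p.2)| ≤ 1 / (n + 1)} :=
    measurable_measure_prodMk_left (measurableSet_abs_dotProduct_sub_le k _)
  have hFint (n : ℕ) : ∫⁻ a in Set.Icc 0 1, F n a ≤ 2 * ∫⁻ x, ∫⁻ y, (edist x y)⁻¹ ∂ν ∂ν := by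
    have hδ : (0 : ℝ) < 1 / (n + 1) := by positivity
    rw [lintegral_const_mul _ (hslab n)]
    refine (mul_le_mul_right (lintegral_measure_abs_dotProduct_le hδ ν) _).trans_eq ?_
    rw [← mul_assoc, ← ENNReal.ofReal_mul (by positivity), mul_left_comm,
      mul_one_div_cancel (by positivity), mul_one, ENNReal.ofReal_ofNat]
  obtain ⟨a, ha, hfreq⟩ := exists_frequently_lt_of_setLIntegral_le (μ := volume)
    measurableSet_Icc (by simp [Real.volume_Icc_pi]) (fun n => (hslab n).const_mul _) hFint hB
  have hδ_lim : Filter.Tendsto (fun n : ℕ => 1 / ((n : ℝ) + 1)) Filter.atTop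
      (nhdsWithin 0 (Set.Ioi 0)) :=
    tendsto_nhdsWithin_iff.2 ⟨tendsto_one_div_add_atTop_nhds_zero_nat,
      Filter.Eventually.of_forall fun n => by rw [Set.mem_Ioi]; positivity⟩
  refine ⟨a, ha, inv_le_volume_dotProduct_image_of_frequently hE ν hνE
    (hδ_lim.frequently (hfreq.mono fun n hn => ?_))⟩
  have hn_pos : (0 : ℝ) < n + 1 := by positivity
  rw [one_div, ENNReal.ofReal_inv_of_pos hn_pos, mul_comm, ← div_eq_mul_inv,
    ENNReal.le_div_iff_mul_le (Or.inl (by simpa using hn_pos)) (by simp), mul_comm, ← one_div]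
  exact hn.le

end Projection

section Expansion

lemma msupport_eq_support {X : Type*} [TopologicalSpace X] [MeasurableSpace X] (μ : Measure X) :
    msupport μ = μ.support := by
  ext x
  rw [Measure.mem_support_iff_forall]
  refine ⟨fun h U hU => ?_, fun h U hU hx => h U (hU.mem_nhds hx)⟩
  obtain ⟨V, hVU, hV, hxV⟩ := mem_nhds_iff.1 hU
  exact (h V hV hxV).trans_le (measure_mono hVU)

lemma exists_ofReal_le_volume_dotImage {κ C : ℝ} {k : ℕ} (hk : 1 < κ * k) (hC : 0 ≤ C) :
    ∃ c > 0, ∀ (μ : Measure ℝ) [IsProbabilityMeasure μ] (K : Set ℝ), IsCompact K →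
      (∀ᵐ x ∂μ, x ∈ K) → IsFrostmanOn μ K κ C →
      ∃ a : Fin k → ℝ, (∀ i, |a i| ≤ 1) ∧ ENNReal.ofReal c ≤ volume (dotImage a K) := by
  set A : ℝ≥0∞ := ENNReal.ofReal (1 + 2 * C ^ k / (1 - 2 ^ (1 - κ * k)))
  have hA : 2 * A ≠ ∞ := ENNReal.mul_ne_top ENNReal.ofNat_ne_top ENNReal.ofReal_ne_top
  have hB : (2 * A + 1)⁻¹ ≠ ∞ := by simp
  refine ⟨(2 * A + 1)⁻¹.toReal,
    ENNReal.toReal_pos (ENNReal.inv_ne_zero.2 (ENNReal.add_ne_top.2 ⟨hA, ENNReal.one_ne_top⟩)) hB,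
    fun μ _ K hK hμK h => ?_⟩
  set ν : Measure (Fin k → ℝ) := Measure.pi fun _ => μ
  have hνK : ∀ᵐ x ∂ν, x ∈ Set.univ.pi fun _ => K := by
    simp only [Set.mem_univ_pi]
    exact ae_all_iff.2 fun i =>
      (Measure.quasiMeasurePreserving_eval (fun _ : Fin k => μ) i).ae hμK
  have hpi : IsFrostmanOn ν (Set.univ.pi fun _ => K) (κ * k) (C ^ k) := by
    simpa using h.pi hC (Fin k)
  have henergy : ∫⁻ x, ∫⁻ y, (edist x y)⁻¹ ∂ν ∂ν ≤ A :=
    calc ∫⁻ x, ∫⁻ y, (edist x y)⁻¹ ∂ν ∂ν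
      _ ≤ ∫⁻ _, A ∂ν := lintegral_mono_ae <|
          hνK.mono fun x hx => hpi.lintegral_inv_edist_le hk (by positivity) hx
      _ = A := by simp
  obtain ⟨a, ha, hvol⟩ := exists_inv_le_volume_dotProduct_image
    (isCompact_univ_pi fun _ => hK) ν hνK (B := 2 * A + 1)
    ((mul_le_mul_right henergy 2).trans_lt (ENNReal.lt_add_right hA one_ne_zero))
  refine ⟨a, fun i => abs_le.2 ⟨?_, ha.2 i⟩, (ENNReal.ofReal_toReal hB).le.trans hvol⟩
  linarith [show 0 ≤ a i from ha.1 i]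

theorem bourgain_expansion_general {κ C : ℝ} (R : ℝ) (hκ : 0 < κ) (hC : 0 ≤ C) :
    ∃ N : ℕ, 0 < N ∧ ∃ c : ℝ, 0 < c ∧
      ∀ (μ : Measure ℝ) [IsProbabilityMeasure μ] (K : Set ℝ), IsClosed K → K ⊆ Set.Icc (-R) R →
        (∀ᵐ x ∂μ, x ∈ K) → IsFrostmanOn μ K κ C →
        ENNReal.ofReal c ≤ volume (sumN N (prodN N K) - sumN N (prodN N K)) := by
  obtain ⟨k, hk⟩ := exists_nat_gt (1 / κ)
  have hk' : 1 < κ * (k + 1 : ℕ) := by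
    rw [div_lt_iff₀' hκ] at hk
    push_cast
    linarith
  obtain ⟨c₀, hc₀, hproj⟩ := exists_ofReal_le_volume_dotImage hk' hC
  obtain ⟨n, hn⟩ := exists_nat_gt (2 * ((k + 1 : ℕ) * R + 1) / c₀)
  rw [div_lt_iff₀ hc₀] at hn
  obtain ⟨ρ, hρ, hspread⟩ := exists_isSpread_of_isFrostmanOn C R hκ
  obtain ⟨m, helim⟩ := exists_two_le_volume_of_Icc_subset_dotImage R hρ k (2 * n) one_ne_zero
  simp only [mul_one] at helim
  set N := max m (2 ^ k)
  refine ⟨N, lt_max_of_lt_right (by positivity), ρ ^ (N - 2 ^ k) * 2, by positivity,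
    fun μ _ K hK hKR hμK h => ?_⟩
  have hKc : IsCompact K := isCompact_Icc.of_isClosed_subset hK hKR
  obtain ⟨a, ha, hvol⟩ := hproj μ K hKc hμK h
  have hKs : IsSpread R ρ K := hspread μ K hKR hμK h
  have hmeas : MeasurableSet (dotImage a K) :=
    ((isCompact_univ_pi fun _ => hKc).image (by fun_prop)).measurableSet
  have hbound : dotImage a K ⊆ Set.Icc (-((k + 1 : ℕ) * R)) ((k + 1 : ℕ) * R) := fun t ht =>
    abs_le.1 (by simpa using abs_le_of_mem_dotImage ha (fun s hs => abs_le.2 (hKR hs)) ht)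
  have hsurj : Set.Icc (-1) 1 ⊆ dotImage a (sumProdDiff K (2 * n) 1) :=
    (Icc_subset_sumN_sub hmeas hbound hc₀ hvol hn).trans
      (sumN_dotImage_sub_subset K hKs.nonempty a (2 * n))
  calc ENNReal.ofReal (ρ ^ (N - 2 ^ k) * 2)
    _ = ENNReal.ofReal (ρ ^ (N - 2 ^ k)) * 2 := by
        rw [ENNReal.ofReal_mul (by positivity), ENNReal.ofReal_ofNat]
    _ ≤ ENNReal.ofReal (ρ ^ (N - 2 ^ k)) * volume (sumProdDiff K m (2 ^ k)) := by
        gcongr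
        exact helim K hKs a ha hsurj
    _ ≤ volume (sumProdDiff K N N) :=
        hKs.ofReal_mul_volume_sumProdDiff_le hρ.le (le_max_left _ _) (le_max_right _ _)

end Expansion

/-- Bourgain's expansion theorem: for `0 < κ < 1` and `C > 0` there are `N ∈ ℕ` and `c > 0`,
depending only on `κ` and `C`, such that for any `(κ, C)`-Frostman probability measure `μ`
supported in `[−C, C]` with support `K`, the set `N K^{(N)} − N K^{(N)}` has Lebesgue measure
at least `c`. -/
theorem bourgain_expansion (κ C : ℝ) (hκ0 : 0 < κ) (hκ1 : κ < 1) (hC : 0 < C) :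
    ∃ N : ℕ, 0 < N ∧ ∃ c : ℝ, 0 < c ∧
      ∀ μ : Measure ℝ, IsProbabilityMeasure μ →
        msupport μ ⊆ Set.Icc (-C) C →
        (∀ x ∈ msupport μ, ∀ r : ℝ, 0 < r →
          μ (Metric.closedBall x r) ≤ ENNReal.ofReal (C * r ^ κ)) →
        ENNReal.ofReal c ≤
          volume (sumN N (prodN N (msupport μ)) - sumN N (prodN N (msupport μ))) := by
  obtain ⟨N, hN, c, hc, h⟩ := bourgain_expansion_general C hκ0 hC.le
  refine ⟨N, hN, c, hc, fun μ _ hsupp hfrost => ?_⟩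
  have hclosed : IsClosed (msupport μ) := msupport_eq_support μ ▸ Measure.isClosed_support
  have hae : ∀ᵐ x ∂μ, x ∈ msupport μ := msupport_eq_support μ ▸ Measure.support_mem_ae
  exact h μ (msupport μ) hclosed hsupp hae hfrost
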